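/- arXiv:1412.3489 — 6 statements merged into one kernel-verified Lean document; each statement's English description precedes it below -/
import Mathlib

section
/- (Lemma 1 of the appendix) Suppose κ > 0 satisfies exp(−E x)/Z_Q ≤ κ · Q x for every x ∈ S. Then for every configuration x ∈ S one has P x ≤ exp(−E x)/Z_Q ≤ κ · Q x. -/
/-! The only content is the variational bound `ZQ ≤ Z`: by Jensen's inequality for the convex
function `exp` with weights `Q`, the exponential of the `Q`-average of `log (exp (-E) / Q)` is at
most the `Q`-average of `exp (-E) / Q`, which is `Z`. Dividing `exp (-E x)` by the smaller
normalisation `ZQ > 0` gives the larger value; the second inequality is the hypothesis on `κ`. -/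

/-- (Lemma 1 of the appendix) If `κ > 0` satisfies
`exp (-E x) / Z_Q ≤ κ * Q x` for every configuration `x`, then for every `x`,
`P x ≤ exp (-E x) / Z_Q ≤ κ * Q x`. -/
theorem gibbs_le_kappa_meanfield {S : Type*} [Fintype S] [Nonempty S]
    (E Q : S → ℝ) (hQpos : ∀ x, 0 < Q x) (hQsum : ∑ x, Q x = 1)
    (Z : ℝ) (hZ : Z = ∑ x, Real.exp (-E x))
    (ZQ : ℝ) (hZQ : ZQ = Real.exp (∑ x, Q x * Real.log (Real.exp (-E x) / Q x)))
    (P : S → ℝ) (hP : ∀ x, P x = Real.exp (-E x) / Z)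
    (κ : ℝ) (hκ : 0 < κ)
    (hbound : ∀ x, Real.exp (-E x) / ZQ ≤ κ * Q x) :
    ∀ x, P x ≤ Real.exp (-E x) / ZQ ∧ Real.exp (-E x) / ZQ ≤ κ * Q x := by
  intro x
  refine ⟨?_, hbound x⟩
  have hle : ZQ ≤ Z := by
    rw [hZQ, hZ]
    have hJ := convexOn_exp.map_sum_le (t := Finset.univ) (w := Q)
      (p := fun y => Real.log (Real.exp (-E y) / Q y))
      (fun y _ => (hQpos y).le) hQsum (fun _ _ => Set.mem_univ _)
    simp only [smul_eq_mul] at hJ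
    refine hJ.trans_eq (Finset.sum_congr rfl fun y _ => ?_)
    rw [Real.exp_log (div_pos (Real.exp_pos _) (hQpos y)), mul_div_cancel₀ _ (hQpos y).ne']
  have hZQpos : 0 < ZQ := hZQ ▸ Real.exp_pos _
  rw [hP x]
  exact div_le_div_of_nonneg_left (Real.exp_pos _).le hZQpos hle
end

section
/- (Lemma 2 of the appendix, success probability of state preparation) Suppose κ > 0 satisfies exp(−E x)/Z_Q ≤ κ · Q x for every x ∈ S, and define 𝒫 x := exp(−E x)/(κ · Z_Q · Q x). Then: (i) 0 ≤ 𝒫 x ≤ 1 for every x; (ii) Q x · 𝒫 x = (Z/(κ Z_Q)) · P x for every x; (iii) the success probability ∑_{x ∈ S} Q x · 𝒫 x equals Z/(κ Z_Q) and satisfies 1/κ ≤ Z/(κ Z_Q) ≤ 1 (in particular κ Z_Q ≥ Z). -/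
/-! The lower bound `1 / κ ≤ Z / (κ * ZQ)` is the Gibbs variational inequality `ZQ ≤ Z`: Jensen for
the convex function `exp` with weights `Q` gives `exp (∑ Q log (w / Q)) ≤ ∑ Q (w / Q) = ∑ w`, where
`w = exp (-E)`. The upper bound `Z ≤ κ * ZQ` is the pointwise bound summed over `S`. The rest
is algebra with positive denominators. -/

/-- The mean-field value of a positive weight `w` is at most its total mass. -/
lemma exp_sum_mul_log_div_le_sum {S : Type*} [Fintype S] (w Q : S → ℝ)
    (hw : ∀ x, 0 < w x) (hQpos : ∀ x, 0 < Q x) (hQsum : ∑ x, Q x = 1) :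
    Real.exp (∑ x, Q x * Real.log (w x / Q x)) ≤ ∑ x, w x := by
  have h := convexOn_exp.map_sum_le (t := Finset.univ) (w := Q)
    (p := fun x => Real.log (w x / Q x)) (fun x _ => (hQpos x).le) hQsum
    (fun x _ => Set.mem_univ _)
  simp only [smul_eq_mul] at h
  refine h.trans_eq (Finset.sum_congr rfl fun x _ => ?_)
  rw [Real.exp_log (div_pos (hw x) (hQpos x)), mul_div_cancel₀ _ (hQpos x).ne']

/-- (Lemma 2 of the appendix) If `κ > 0` satisfies
`exp (-E x) / Z_Q ≤ κ * Q x` for every `x`, and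
`calP x := exp (-E x) / (κ * Z_Q * Q x)`, then (i) `0 ≤ calP x ≤ 1`,
(ii) `Q x * calP x = (Z / (κ * Z_Q)) * P x`, and (iii) the success probability
`∑ x, Q x * calP x` equals `Z / (κ * Z_Q)` and satisfies
`1/κ ≤ Z / (κ * Z_Q) ≤ 1` (in particular `Z ≤ κ * Z_Q`). -/
theorem state_prep_success_probability {S : Type*} [Fintype S] [Nonempty S]
    (E Q : S → ℝ) (hQpos : ∀ x, 0 < Q x) (hQsum : ∑ x, Q x = 1)
    (Z : ℝ) (hZ : Z = ∑ x, Real.exp (-E x))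
    (ZQ : ℝ) (hZQ : ZQ = Real.exp (∑ x, Q x * Real.log (Real.exp (-E x) / Q x)))
    (P : S → ℝ) (hP : ∀ x, P x = Real.exp (-E x) / Z)
    (κ : ℝ) (hκ : 0 < κ)
    (hbound : ∀ x, Real.exp (-E x) / ZQ ≤ κ * Q x)
    (calP : S → ℝ) (hcalP : ∀ x, calP x = Real.exp (-E x) / (κ * ZQ * Q x)) :
    (∀ x, 0 ≤ calP x ∧ calP x ≤ 1) ∧
    (∀ x, Q x * calP x = (Z / (κ * ZQ)) * P x) ∧
    (∑ x, Q x * calP x = Z / (κ * ZQ)) ∧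
    1 / κ ≤ Z / (κ * ZQ) ∧ Z / (κ * ZQ) ≤ 1 ∧ Z ≤ κ * ZQ := by
  have hZQpos : 0 < ZQ := hZQ ▸ Real.exp_pos _
  have hZpos : 0 < Z :=
    hZ ▸ Finset.sum_pos (fun x _ => Real.exp_pos _) Finset.univ_nonempty
  have hκZQ : 0 < κ * ZQ := mul_pos hκ hZQpos
  have hpt : ∀ x, Real.exp (-E x) ≤ κ * ZQ * Q x := fun x => by
    have h := (div_le_iff₀ hZQpos).1 (hbound x)
    linarith
  have hZle : Z ≤ κ * ZQ := by
    calc Z = ∑ x, Real.exp (-E x) := hZ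
      _ ≤ ∑ x, κ * ZQ * Q x := Finset.sum_le_sum fun x _ => hpt x
      _ = κ * ZQ := by rw [← Finset.mul_sum, hQsum, mul_one]
  have hZQle : ZQ ≤ Z := by
    rw [hZQ, hZ]
    exact exp_sum_mul_log_div_le_sum _ Q (fun x => Real.exp_pos _) hQpos hQsum
  have hprod : ∀ x, Q x * calP x = Real.exp (-E x) / (κ * ZQ) := fun x => by
    have := hQpos x
    rw [hcalP]
    field_simp
  refine ⟨fun x => ?_, fun x => ?_, ?_, ?_, (div_le_one hκZQ).2 hZle, hZle⟩
  · have hden : 0 < κ * ZQ * Q x := mul_pos hκZQ (hQpos x)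
    rw [hcalP]
    exact ⟨(div_pos (Real.exp_pos _) hden).le, (div_le_one hden).2 (hpt x)⟩
  · rw [hprod, hP]
    field_simp
  · simp_rw [hprod]
    rw [← Finset.sum_div, ← hZ]
  · rw [div_le_div_iff₀ hκ hκZQ, one_mul, mul_comm Z κ]
    exact mul_le_mul_of_nonneg_left hZQle hκ.le
end

section
/- (Lemma 3 of the appendix, fidelity bound) Let κ > 0 and partition S into good := {x ∈ S : exp(−E x) ≤ κ · Z_Q · Q x} and bad := S \ good, and suppose ∑_{x ∈ bad} (exp(−E x) − κ · Z_Q · Q x) ≤ ε · Z for some ε with 0 ≤ ε ≤ 1. Then the fidelity of the prepared state with the ideal coherent Gibbs state satisfies (∑_{x ∈ good} exp(−E x) + ∑_{x ∈ bad} √(Q x · Z_Q · κ · exp(−E x))) / √(Z · (∑_{x ∈ good} exp(−E x) + ∑_{x ∈ bad} Z_Q · κ · Q x)) ≥ √(1 − ε) ≥ 1 − ε. -/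
/-!
Write `W` for the total mass `∑ good, e^{-E} + ∑ bad, Z_Q κ Q` of the truncated weights
`min (e^{-E}) (κ Z_Q Q)`. The numerator is at least `W`, because on `bad` the geometric mean of
`κ Z_Q Q` and `e^{-E}` is at least the smaller of the two, `κ Z_Q Q`. The hypothesis on the
excess mass says exactly that `(1 - ε) Z ≤ W`, so
`√(1 - ε) √(Z W) = √((1 - ε) Z W) ≤ √(W²) = W`, and `W > 0` allows dividing by `√(Z W)`.
-/

open Finset in
/-- (Lemma 3 of the appendix, fidelity bound) With
`good := {x | exp (-E x) ≤ κ * Z_Q * Q x}` and `bad` its complement, if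
`∑ x in bad, (exp (-E x) - κ * Z_Q * Q x) ≤ ε * Z` with `0 ≤ ε ≤ 1`, then the
fidelity of the prepared state with the ideal coherent Gibbs state satisfies
`(∑ good, e^{-E} + ∑ bad, √(Q Z_Q κ e^{-E})) / √(Z (∑ good, e^{-E} + ∑ bad, Z_Q κ Q))
  ≥ √(1-ε) ≥ 1 - ε`. -/
theorem state_prep_fidelity_bound
    {S : Type*} [Fintype S] [Nonempty S] [DecidableEq S]
    (E Q : S → ℝ) (hQpos : ∀ x, 0 < Q x) (hQsum : ∑ x, Q x = 1)
    (Z : ℝ) (hZ : Z = ∑ x, Real.exp (-E x))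
    (ZQ : ℝ) (hZQ : ZQ = Real.exp (∑ x, Q x * Real.log (Real.exp (-E x) / Q x)))
    (κ : ℝ) (hκ : 0 < κ)
    (good bad : Finset S)
    (hgood : good = univ.filter fun x => Real.exp (-E x) ≤ κ * ZQ * Q x)
    (hbad : bad = univ \ good)
    (ε : ℝ) (hε0 : 0 ≤ ε) (hε1 : ε ≤ 1)
    (hbadsum : ∑ x ∈ bad, (Real.exp (-E x) - κ * ZQ * Q x) ≤ ε * Z) :
    Real.sqrt (1 - ε)
        ≤ ((∑ x ∈ good, Real.exp (-E x))
            + ∑ x ∈ bad, Real.sqrt (Q x * ZQ * κ * Real.exp (-E x)))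
          / Real.sqrt (Z * ((∑ x ∈ good, Real.exp (-E x))
            + ∑ x ∈ bad, ZQ * κ * Q x)) ∧
    1 - ε ≤ Real.sqrt (1 - ε) := by
  have hZQpos : 0 < ZQ := hZQ ▸ Real.exp_pos _
  have hZpos : 0 < Z := hZ ▸ sum_pos (fun x _ => Real.exp_pos _) univ_nonempty
  have hq : ∀ x, 0 < ZQ * κ * Q x := fun x => mul_pos (mul_pos hZQpos hκ) (hQpos x)
  have hsplit : Z = (∑ x ∈ good, Real.exp (-E x)) + ∑ x ∈ bad, Real.exp (-E x) := by
    rw [hZ, hbad, add_comm, sum_sdiff (subset_univ good)]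
  have hlt : ∀ x ∈ bad, ZQ * κ * Q x ≤ Real.exp (-E x) := by
    intro x hx
    have h : κ * ZQ * Q x < Real.exp (-E x) := by simpa [hbad, hgood] using hx
    linarith [mul_comm κ ZQ ▸ h]
  have hG : 0 ≤ ∑ x ∈ good, Real.exp (-E x) := sum_nonneg fun x _ => (Real.exp_pos _).le
  have hB : 0 ≤ ∑ x ∈ bad, ZQ * κ * Q x := sum_nonneg fun x _ => (hq x).le
  have hWpos : 0 < (∑ x ∈ good, Real.exp (-E x)) + ∑ x ∈ bad, ZQ * κ * Q x := by
    rcases good.eq_empty_or_nonempty with h | h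
    · have hb : bad.Nonempty := by simp [hbad, h]
      exact add_pos_of_nonneg_of_pos hG (sum_pos (fun x _ => hq x) hb)
    · exact add_pos_of_pos_of_nonneg (sum_pos (fun x _ => Real.exp_pos _) h) hB
  have hN : ∑ x ∈ bad, ZQ * κ * Q x
      ≤ ∑ x ∈ bad, Real.sqrt (Q x * ZQ * κ * Real.exp (-E x)) := by
    refine sum_le_sum fun x hx => Real.le_sqrt_of_sq_le ?_
    nlinarith [mul_le_mul_of_nonneg_left (hlt x hx) (hq x).le]
  have hW : (1 - ε) * Z ≤ (∑ x ∈ good, Real.exp (-E x)) + ∑ x ∈ bad, ZQ * κ * Q x := by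
    rw [sum_sub_distrib] at hbadsum
    simp only [mul_comm κ ZQ] at hbadsum
    linarith
  constructor
  · rw [le_div_iff₀ (Real.sqrt_pos.mpr (mul_pos hZpos hWpos)),
      ← Real.sqrt_mul (by linarith)]
    refine le_trans (Real.sqrt_le_left hWpos.le |>.mpr ?_) (by gcongr)
    nlinarith [mul_le_mul_of_nonneg_right hW hWpos.le]
  · exact Real.le_sqrt_of_sq_le (by nlinarith)
end

section
/- (Derivative bound in the proof of Corollary 1) For every natural number m and every s with 0 < s ≤ 1/4, sin(2·arcsin(√s)/(2m+1)) / (2·√s·√(1−s)·(2m+1)) ≤ 2π / (3^{3/2}·(2m+1)²). -/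
/-!
Put `θ = arcsin √s ∈ (0, π/6]` and `k = 2m + 1`. The denominator on the left is `k * sin (2θ)`, and
the numerator is at most `2θ / k`, so it suffices to bound `2θ / sin (2θ)` by its value
`2π / (3√3)` at `2θ = π/3`. That is concavity of sine on `[0, π]`: on `[0, π/3]` its graph lies
above the chord joining `(0, 0)` to `(π/3, √3/2)`.
-/

/-- Sine lies above its chord on `[0, π/3]`. -/
lemma chord_le_sin {x : ℝ} (hx0 : 0 ≤ x) (hx1 : x ≤ Real.pi / 3) :
    x * (3 * Real.sqrt 3) ≤ 2 * Real.pi * Real.sin x := by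
  have hpi := Real.pi_pos
  have h := strictConcaveOn_sin_Icc.concaveOn.2
    (show (0 : ℝ) ∈ Set.Icc 0 Real.pi from ⟨le_rfl, hpi.le⟩)
    (show Real.pi / 3 ∈ Set.Icc 0 Real.pi from ⟨by positivity, by linarith⟩)
    (show 0 ≤ 1 - 3 * x / Real.pi by rw [sub_nonneg, div_le_one hpi]; linarith)
    (show 0 ≤ 3 * x / Real.pi by positivity) (by ring)
  simp only [smul_eq_mul, Real.sin_zero, mul_zero, zero_add, Real.sin_pi_div_three] at h
  have e : 3 * x / Real.pi * (Real.pi / 3) = x := by field_simp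
  rw [e] at h
  calc x * (3 * Real.sqrt 3)
      = 2 * Real.pi * (3 * x / Real.pi * (Real.sqrt 3 / 2)) := by field_simp
    _ ≤ 2 * Real.pi * Real.sin x := by gcongr

/-- (Derivative bound in the proof of Corollary 1) For all `m : ℕ` and
`0 < s ≤ 1/4`,
`sin(2 arcsin √s / (2m+1)) / (2 √s √(1-s) (2m+1)) ≤ 2π / (3^{3/2} (2m+1)²)`. -/
theorem derivative_bound (m : ℕ) (s : ℝ) (hs0 : 0 < s) (hs1 : s ≤ 1 / 4) :
    Real.sin (2 * Real.arcsin (Real.sqrt s) / (2 * (m : ℝ) + 1))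
        / (2 * Real.sqrt s * Real.sqrt (1 - s) * (2 * (m : ℝ) + 1))
      ≤ 2 * Real.pi / ((3 : ℝ) ^ ((3 : ℝ) / 2) * (2 * (m : ℝ) + 1) ^ 2) := by
  have h3 : (3 : ℝ) ^ ((3 : ℝ) / 2) = 3 * Real.sqrt 3 := by
    rw [show (3 : ℝ) / 2 = 1 + 1 / 2 by norm_num, Real.rpow_add (by norm_num), Real.rpow_one,
      Real.sqrt_eq_rpow]
  have hq : 0 < Real.sqrt s := Real.sqrt_pos.2 hs0
  have hq2 : Real.sqrt s ≤ 1 / 2 := Real.sqrt_le_iff.2 ⟨by norm_num, by linarith⟩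
  have hr : 0 < Real.sqrt (1 - s) := Real.sqrt_pos.2 (by linarith)
  have hθ0 : 0 ≤ Real.arcsin (Real.sqrt s) := Real.arcsin_nonneg.2 hq.le
  have hθ1 : Real.arcsin (Real.sqrt s) ≤ Real.pi / 6 := by
    rw [Real.arcsin_le_iff_le_sin' ⟨by linarith [Real.pi_pos], by linarith [Real.pi_pos]⟩,
      Real.sin_pi_div_six]
    exact hq2
  have hsin : Real.sin (2 * Real.arcsin (Real.sqrt s)) = 2 * Real.sqrt s * Real.sqrt (1 - s) := by
    rw [Real.sin_two_mul, Real.cos_arcsin, Real.sin_arcsin (by linarith) (by linarith),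
      Real.sq_sqrt hs0.le]
  have hc := chord_le_sin (x := 2 * Real.arcsin (Real.sqrt s)) (by linarith) (by linarith)
  rw [hsin] at hc
  rw [h3]
  have hk : 0 < 2 * (m : ℝ) + 1 := by positivity
  set θ := Real.arcsin (Real.sqrt s)
  set k := 2 * (m : ℝ) + 1
  set D := 2 * Real.sqrt s * Real.sqrt (1 - s)
  have hD : 0 < D := by positivity
  calc Real.sin (2 * θ / k) / (D * k) ≤ (2 * θ / k) / (D * k) := by
        gcongr
        exact Real.sin_le (by positivity)
    _ = 2 * θ / D / k ^ 2 := by field_simp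
    _ ≤ 2 * Real.pi / (3 * Real.sqrt 3) / k ^ 2 := by
        gcongr ?_ / _
        rwa [div_le_div_iff₀ hD (by positivity)]
    _ = 2 * Real.pi / (3 * Real.sqrt 3 * k ^ 2) := by rw [div_div]
end

section
/- (Taylor remainder bound, eq. (C.10) in the proof of Corollary 1) Let m be a natural number and define f(s) := sin²(arcsin(√s)/(2m+1)). For all s and Δ₀ with 0 < s, 0 ≤ Δ₀ and s + Δ₀ ≤ 1/4, one has |f(s + Δ₀) − f(s)| ≤ 2π·Δ₀ / (3^{3/2}·(2m+1)²). -/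
/-!
Put `s = sin² θ` with `θ = arcsin √s`, `n = 2m+1` and `C = 2π / 3^{3/2}`. The range `s ≤ 1/4`
becomes `θ ∈ [0, π/6]`, and the claim says that `C sin² θ - n² sin² (θ/n)` is monotone there
(`monotoneOn_gap`). Its derivative is `C sin 2θ - n sin (2θ/n) ≥ C sin 2θ - 2θ`, which is nonnegative
because concavity of `sin` on `[0, π/3]` gives `u ≤ C sin u` (`le_mul_sin`), with equality at
`u = π/3`.
-/

lemma three_rpow_three_halves : (3 : ℝ) ^ ((3 : ℝ) / 2) = 3 * Real.sqrt 3 := by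
  rw [show (3 : ℝ) / 2 = 1 + 1 / 2 by norm_num, Real.rpow_add (by norm_num), Real.rpow_one,
    Real.sqrt_eq_rpow]

/-- On `[0, π/3]` the graph of `sin` lies above its chord. -/
lemma le_mul_sin {u : ℝ} (h0 : 0 ≤ u) (h1 : u ≤ Real.pi / 3) :
    u ≤ 2 * Real.pi / (3 * Real.sqrt 3) * Real.sin u := by
  have hpi := Real.pi_pos
  have h3 : 0 < Real.sqrt 3 := by positivity
  have ht : 3 * u / Real.pi ≤ 1 := by
    rw [div_le_one hpi]; linarith
  have hx : Real.pi / 3 ∈ Set.Icc 0 Real.pi := ⟨by positivity, by linarith⟩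
  have hy : (0 : ℝ) ∈ Set.Icc 0 Real.pi := ⟨le_rfl, hpi.le⟩
  have hc : 0 ≤ 3 * u / Real.pi := by positivity
  have h := strictConcaveOn_sin_Icc.concaveOn.2 hx hy hc (sub_nonneg.2 ht) (by ring)
  simp only [smul_eq_mul, Real.sin_zero, mul_zero, add_zero, Real.sin_pi_div_three] at h
  rw [show 3 * u / Real.pi * (Real.pi / 3) = u by field_simp] at h
  calc u = 2 * Real.pi / (3 * Real.sqrt 3) * (3 * u / Real.pi * (Real.sqrt 3 / 2)) := by
        field_simp
    _ ≤ _ := by gcongr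

lemma monotoneOn_gap {n : ℝ} (hn : 0 < n) :
    MonotoneOn (fun θ : ℝ => 2 * Real.pi / (3 * Real.sqrt 3) * Real.sin θ ^ 2
      - n ^ 2 * Real.sin (θ / n) ^ 2) (Set.Icc 0 (Real.pi / 6)) := by
  have hd : ∀ θ : ℝ, HasDerivAt (fun θ : ℝ => 2 * Real.pi / (3 * Real.sqrt 3) * Real.sin θ ^ 2
      - n ^ 2 * Real.sin (θ / n) ^ 2)
      (2 * Real.pi / (3 * Real.sqrt 3) * Real.sin (2 * θ) - n * Real.sin (2 * (θ / n))) θ := by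
    intro θ
    have h1 := ((Real.hasDerivAt_sin θ).pow 2).const_mul (2 * Real.pi / (3 * Real.sqrt 3))
    have h2 := ((((hasDerivAt_id θ).div_const n).sin).pow 2).const_mul (n ^ 2)
    refine (h1.sub h2).congr_deriv ?_
    rw [Real.sin_two_mul, Real.sin_two_mul]
    simp only [id]
    field_simp
    ring
  refine monotoneOn_of_deriv_nonneg (convex_Icc _ _)
    (fun θ _ => (hd θ).continuousAt.continuousWithinAt)
    (fun θ _ => (hd θ).differentiableAt.differentiableWithinAt) fun θ hθ => ?_
  rw [interior_Icc] at hθ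
  rw [(hd θ).deriv]
  have h1 := le_mul_sin (u := 2 * θ) (by linarith [hθ.1]) (by linarith [hθ.2])
  have h2 : n * Real.sin (2 * (θ / n)) ≤ n * (2 * (θ / n)) :=
    mul_le_mul_of_nonneg_left
      (Real.sin_le (mul_nonneg zero_le_two (div_nonneg hθ.1.le hn.le))) hn.le
  rw [show n * (2 * (θ / n)) = 2 * θ by field_simp] at h2
  linarith

lemma arcsin_sqrt_mem {s : ℝ} (h1 : s ≤ 1 / 4) :
    Real.arcsin (Real.sqrt s) ∈ Set.Icc 0 (Real.pi / 6) := by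
  refine ⟨Real.arcsin_nonneg.2 (Real.sqrt_nonneg s), ?_⟩
  have hpi := Real.pi_pos
  rw [Real.arcsin_le_iff_le_sin' ⟨by linarith, by linarith⟩, Real.sin_pi_div_six]
  exact Real.sqrt_le_iff.2 ⟨by norm_num, by linarith⟩

lemma sin_arcsin_sqrt_sq {s : ℝ} (h0 : 0 ≤ s) (h1 : s ≤ 1) :
    Real.sin (Real.arcsin (Real.sqrt s)) ^ 2 = s := by
  rw [Real.sin_arcsin (by linarith [Real.sqrt_nonneg s]) (Real.sqrt_le_one.2 h1),
    Real.sq_sqrt h0]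

/-- (Taylor remainder bound, eq. (C.10) in the proof of Corollary 1) For
`f s := sin²(arcsin √s / (2m+1))`, if `0 < s`, `0 ≤ Δ₀` and `s + Δ₀ ≤ 1/4`,
then `|f (s + Δ₀) - f s| ≤ 2π Δ₀ / (3^{3/2} (2m+1)²)`. -/
theorem taylor_remainder_bound (m : ℕ)
    (f : ℝ → ℝ)
    (hf : ∀ s : ℝ, f s
      = Real.sin (Real.arcsin (Real.sqrt s) / (2 * (m : ℝ) + 1)) ^ 2)
    (s Δ₀ : ℝ) (hs : 0 < s) (hΔ₀ : 0 ≤ Δ₀) (hsum : s + Δ₀ ≤ 1 / 4) :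
    |f (s + Δ₀) - f s|
      ≤ 2 * Real.pi * Δ₀ / ((3 : ℝ) ^ ((3 : ℝ) / 2) * (2 * (m : ℝ) + 1) ^ 2) := by
  have hn1 : (1 : ℝ) ≤ 2 * (m : ℝ) + 1 := by
    have : (0 : ℝ) ≤ m := Nat.cast_nonneg m
    linarith
  rw [hf, hf, three_rpow_three_halves]
  generalize 2 * (m : ℝ) + 1 = n at hn1 ⊢
  have hn : 0 < n := by linarith
  have ha := arcsin_sqrt_mem hsum
  have hb := arcsin_sqrt_mem (s := s) (by linarith)
  have hba : Real.arcsin (Real.sqrt s) ≤ Real.arcsin (Real.sqrt (s + Δ₀)) :=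
    Real.monotone_arcsin (Real.sqrt_le_sqrt (by linarith))
  have hmono := monotoneOn_gap hn hb ha hba
  simp only [sin_arcsin_sqrt_sq hs.le (by linarith),
    sin_arcsin_sqrt_sq (s := s + Δ₀) (by linarith) (by linarith)] at hmono
  generalize Real.arcsin (Real.sqrt s) = b at *
  generalize Real.arcsin (Real.sqrt (s + Δ₀)) = a at *
  have hpi := Real.pi_pos
  have han : a / n ≤ Real.pi / 2 := (div_le_self ha.1 hn1).trans (by linarith [ha.2])
  have hbn : 0 ≤ b / n := div_nonneg hb.1 hn.le
  have hban : b / n ≤ a / n := by gcongr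
  have hsin : Real.sin (b / n) ^ 2 ≤ Real.sin (a / n) ^ 2 :=
    pow_le_pow_left₀ (Real.sin_nonneg_of_nonneg_of_le_pi hbn (by linarith))
      (Real.sin_le_sin_of_le_of_le_pi_div_two (by linarith) han hban) 2
  rw [abs_of_nonneg (sub_nonneg.2 hsin), ← div_div, le_div_iff₀ (by positivity), mul_div_right_comm]
  linarith
end

section
/- (Gradient of the maximum-likelihood objective, eq. (4)) Fix indices (i₀, j₀) and regard the maximum-likelihood objective as a function of the single weight t = w_{i₀,j₀} with all other weights and biases held fixed: F(t) := (1/N)·∑_{x ∈ T} log(∑_h exp(−E_t(x,h))) − log Z_t − (λ/2)·(t² + ∑_{(i,j)≠(i₀,j₀)} w_{i,j}²), where E_t denotes the energy with w_{i₀,j₀} replaced by t and Z_t the corresponding partition function. Then F has derivative ⟨v_{i₀} h_{j₀}⟩_data − ⟨v_{i₀} h_{j₀}⟩_model − λ·t at t, where ⟨v_{i₀} h_{j₀}⟩_data := (1/N)·∑_{x ∈ T} (∑_h x_{i₀} h_{j₀} exp(−E_t(x,h)))/(∑_h exp(−E_t(x,h))) and ⟨v_{i₀} h_{j₀}⟩_model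 := (∑_{v,h} v_{i₀} h_{j₀} exp(−E_t(v,h)))/Z_t. -/
/-!
The energy is affine in the single weight `t = w i₀ j₀`, with slope `-v i₀ * h j₀`, so each
Boltzmann factor `exp (-E_t(v,h))` has derivative `v i₀ * h j₀ * exp (-E_t(v,h))`. Every logarithm
in the objective is that of a finite nonempty sum of such factors, hence of a positive number, and
its derivative is the corresponding weighted average of `v i₀ * h j₀`
(`hasDerivAt_log_sum_of_logDeriv`): over the hidden configurations for the data terms, over all
configurations for `log Z_t`. The regularizer contributes `-λ t`.
-/

/-- If positive functions `f a` have logarithmic derivatives `c a` at `t`, then the derivative of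
the logarithm of their sum is the average of `c` with weights `f a t`. -/
lemma hasDerivAt_log_sum_of_logDeriv {α : Type*} [Fintype α] [Nonempty α]
    {f : α → ℝ → ℝ} {c : α → ℝ} {t : ℝ} (hpos : ∀ a, 0 < f a t)
    (hf : ∀ a, HasDerivAt (f a) (c a * f a t) t) :
    HasDerivAt (fun s => Real.log (∑ a, f a s)) ((∑ a, c a * f a t) / ∑ a, f a t) t :=
  (HasDerivAt.fun_sum fun a _ => hf a).log
    (Finset.sum_pos (fun a _ => hpos a) Finset.univ_nonempty).ne'

/-- (Gradient of the maximum-likelihood objective, eq. (4)) Viewing the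
maximum-likelihood objective as a function `F` of the single weight
`t = w i₀ j₀` (all other parameters fixed), `F` has derivative
`⟨v_{i₀} h_{j₀}⟩_data - ⟨v_{i₀} h_{j₀}⟩_model - λ t` at `t`. -/
theorem ml_objective_gradient (nv nh : ℕ)
    (b : Fin nv → ℝ) (d : Fin nh → ℝ) (w : Fin nv → Fin nh → ℝ)
    (lam : ℝ) (N : ℕ) (hN : 0 < N) (x : Fin N → Fin nv → Fin 2)
    (i₀ : Fin nv) (j₀ : Fin nh)
    (wt : ℝ → Fin nv → Fin nh → ℝ)
    (hwt : ∀ t i j, wt t i j = if i = i₀ ∧ j = j₀ then t else w i j)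
    (En : ℝ → (Fin nv → Fin 2) → (Fin nh → Fin 2) → ℝ)
    (hE : ∀ t v h, En t v h
      = -(∑ i, ((v i : ℕ) : ℝ) * b i) - (∑ j, ((h j : ℕ) : ℝ) * d j)
        - ∑ i, ∑ j, wt t i j * ((v i : ℕ) : ℝ) * ((h j : ℕ) : ℝ))
    (Zt : ℝ → ℝ)
    (hZ : ∀ t, Zt t
      = ∑ v : Fin nv → Fin 2, ∑ h : Fin nh → Fin 2, Real.exp (-En t v h))
    (F : ℝ → ℝ)
    (hF : ∀ t, F t
      = (1 / (N : ℝ)) * ∑ p : Fin N,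
          Real.log (∑ h : Fin nh → Fin 2, Real.exp (-En t (x p) h))
        - Real.log (Zt t)
        - (lam / 2) * (t ^ 2
            + ∑ i, ∑ j, if (i, j) ≠ (i₀, j₀) then w i j ^ 2 else 0))
    (t : ℝ) :
    HasDerivAt F
      ((1 / (N : ℝ)) * (∑ p : Fin N,
          (∑ h : Fin nh → Fin 2,
            ((x p i₀ : ℕ) : ℝ) * ((h j₀ : ℕ) : ℝ) * Real.exp (-En t (x p) h))
          / (∑ h : Fin nh → Fin 2, Real.exp (-En t (x p) h)))
        - (∑ v : Fin nv → Fin 2, ∑ h : Fin nh → Fin 2,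
            ((v i₀ : ℕ) : ℝ) * ((h j₀ : ℕ) : ℝ) * Real.exp (-En t v h)) / Zt t
        - lam * t) t := by
  have hexp : ∀ v h, HasDerivAt (fun s => Real.exp (-En s v h))
      (((v i₀ : ℕ) : ℝ) * ((h j₀ : ℕ) : ℝ) * Real.exp (-En t v h)) t := by
    intro v h
    have hw : ∀ i j, HasDerivAt (fun s => wt s i j) (if i = i₀ ∧ j = j₀ then 1 else 0) t := by
      intro i j
      simp only [hwt]
      split_ifs
      · exact hasDerivAt_id t
      · exact hasDerivAt_const t _
    have hS : HasDerivAt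
        (fun s => ∑ i, ∑ j, wt s i j * ((v i : ℕ) : ℝ) * ((h j : ℕ) : ℝ))
        (((v i₀ : ℕ) : ℝ) * ((h j₀ : ℕ) : ℝ)) t := by
      have := HasDerivAt.fun_sum (u := Finset.univ) fun i _ =>
        HasDerivAt.fun_sum (u := Finset.univ) fun j _ =>
          ((hw i j).mul_const ((v i : ℕ) : ℝ)).mul_const ((h j : ℕ) : ℝ)
      exact this.congr_deriv (by simp [ite_and])
    have hEn : HasDerivAt (fun s => -En s v h) (((v i₀ : ℕ) : ℝ) * ((h j₀ : ℕ) : ℝ)) t := by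
      simp only [hE]
      simpa using (hS.const_sub
        (-(∑ i, ((v i : ℕ) : ℝ) * b i) - (∑ j, ((h j : ℕ) : ℝ) * d j))).fun_neg
    simpa [mul_comm] using hEn.exp
  have hdata := (HasDerivAt.fun_sum (u := Finset.univ) fun p _ =>
    hasDerivAt_log_sum_of_logDeriv (fun h => Real.exp_pos (-En t (x p) h))
      (fun h => hexp (x p) h)).const_mul (1 / (N : ℝ))
  have hmodel : HasDerivAt (fun s => Real.log (Zt s))
      ((∑ v : Fin nv → Fin 2, ∑ h : Fin nh → Fin 2,
        ((v i₀ : ℕ) : ℝ) * ((h j₀ : ℕ) : ℝ) * Real.exp (-En t v h)) / Zt t) t := by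
    have := hasDerivAt_log_sum_of_logDeriv
      (fun a : (Fin nv → Fin 2) × (Fin nh → Fin 2) => Real.exp_pos (-En t a.1 a.2))
      (fun a => hexp a.1 a.2)
    simpa only [hZ, Fintype.sum_prod_type] using this
  have hreg := ((hasDerivAt_pow 2 t).add_const
    (∑ i, ∑ j, if (i, j) ≠ (i₀, j₀) then w i j ^ 2 else 0)).const_mul (lam / 2)
  rw [funext hF]
  exact ((hdata.fun_sub hmodel).fun_sub hreg).congr_deriv (by push_cast; ring)
end
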